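/- Let (a^k)_k and (b^k)_k be two sequences in the class 𝒮′ such that for every ε > 0 there exists M > 0 with #{1 ≤ j ≤ k : |a_j^k| > M}/k < ε and #{1 ≤ j ≤ k : |b_j^k| > M}/k < ε for all sufficiently large k. Then there exist a strictly increasing sequence of positive integers (k_j)_j and a probability measure μ on ℝ² such that for every bounded continuous function φ : ℝ → ℝ, lim_{j→∞} (1/k_j)·Trace[φ(J(a^{k_j}, b^{k_j}))] = (1/π) ∫_{ℝ²} ∫_0^π φ(x + 2y·cos t) dt dμ(x,y). -/

import Mathlib

open Filter MeasureTheory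

noncomputable section

/-- The `k × k` Jacobi (real symmetric tridiagonal) matrix with diagonal entries
`a 0, …, a (k-1)` and sub/super-diagonal entries `b 0, …, b (k-2)` (0-indexed). -/
def jacobiMatrix (k : ℕ) (a b : ℕ → ℝ) : Matrix (Fin k) (Fin k) ℝ :=
  Matrix.of fun i j =>
    if (i : ℕ) = (j : ℕ) then a i
    else if (i : ℕ) + 1 = (j : ℕ) then b i
    else if (j : ℕ) + 1 = (i : ℕ) then b j
    else 0

theorem jacobiMatrix_isHermitian (k : ℕ) (a b : ℕ → ℝ) :
    (jacobiMatrix k a b).IsHermitian := by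
  show _ = _
  ext i j
  simp only [Matrix.conjTranspose_apply, jacobiMatrix, Matrix.of_apply, star_trivial]
  by_cases h1 : (i : ℕ) = (j : ℕ)
  · have h : i = j := Fin.ext h1
    subst h
    rfl
  · have h1' : ¬ (j : ℕ) = (i : ℕ) := fun h => h1 h.symm
    by_cases h2 : (i : ℕ) + 1 = (j : ℕ)
    · have h3 : ¬ (j : ℕ) + 1 = (i : ℕ) := by omega
      simp [h1, h1', h2, h3]
    · by_cases h3 : (j : ℕ) + 1 = (i : ℕ) <;> simp [h1, h1', h2, h3]

/-- `Trace[φ(J(a,b))] = ∑ⱼ φ(λⱼ)`, the sum of `φ` over the eigenvalues of the Jacobi matrix. -/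
def jacobiTrace (k : ℕ) (a b : ℕ → ℝ) (φ : ℝ → ℝ) : ℝ :=
  ∑ i, φ ((jacobiMatrix_isHermitian k a b).eigenvalues i)

/-- The class `𝒮`: small deviations `∑ᵢ |a_{i+1}^k − a_i^k| = o(k)` and entries in `[0,1]`. -/
def MemS (a : ℕ → ℕ → ℝ) : Prop :=
  ((fun k : ℕ => ∑ i ∈ Finset.range (k - 1), |a k (i + 1) - a k i|)
      =o[Filter.atTop] fun k : ℕ => (k : ℝ)) ∧
  ∀ k : ℕ, ∀ i < k, a k i ∈ Set.Icc (0 : ℝ) 1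

/-- The class `𝒮′`: for every `δ ∈ (0,1)`, `∑ᵢ |a_{i+1}^k − a_i^k| = O(k^{1−δ})`, and
`maxᵢ |a_i^k| = O(log k)`. -/
def MemS' (a : ℕ → ℕ → ℝ) : Prop :=
  (∀ δ : ℝ, δ ∈ Set.Ioo (0 : ℝ) 1 →
    ((fun k : ℕ => ∑ i ∈ Finset.range (k - 1), |a k (i + 1) - a k i|)
        =O[Filter.atTop] fun k : ℕ => (k : ℝ) ^ (1 - δ))) ∧
  ∃ C : ℝ, ∀ᶠ k : ℕ in Filter.atTop, ∀ i < k, |a k i| ≤ C * Real.log k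

/-- `μ`-distributed on `I² = [0,1]²`. -/
def MuDistributedI (a b : ℕ → ℕ → ℝ) (μ : Measure (ℝ × ℝ)) : Prop :=
  ∀ ψ : ℝ × ℝ → ℝ, ContinuousOn ψ (Set.Icc (0 : ℝ) 1 ×ˢ Set.Icc (0 : ℝ) 1) →
    Filter.Tendsto (fun k : ℕ => (1 / (k : ℝ)) * ∑ j ∈ Finset.range k, ψ (a k j, b k j))
      Filter.atTop (nhds (∫ p, ψ p ∂μ))

/-- `μ`-distributed on `ℝ²` (test functions: bounded continuous). -/
def MuDistributedR (a b : ℕ → ℕ → ℝ) (μ : Measure (ℝ × ℝ)) : Prop :=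
  ∀ ψ : ℝ × ℝ → ℝ, Continuous ψ → (∃ C : ℝ, ∀ p, |ψ p| ≤ C) →
    Filter.Tendsto (fun k : ℕ => (1 / (k : ℝ)) * ∑ j ∈ Finset.range k, ψ (a k j, b k j))
      Filter.atTop (nhds (∫ p, ψ p ∂μ))

/-- Tightness via closed bounded rectangles. -/
def TightRect (μ : Measure (ℝ × ℝ)) : Prop :=
  ∀ ε : ℝ, 0 < ε → ∃ x₁ x₂ y₁ y₂ : ℝ,
    μ ((Set.Icc x₁ x₂ ×ˢ Set.Icc y₁ y₂)ᶜ) < ENNReal.ofReal ε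

/-- Almost everywhere increasing sequence of vectors. -/
def AEIncreasing (a : ℕ → ℕ → ℝ) : Prop :=
  Filter.Tendsto
    (fun k : ℕ => (((Finset.range (k - 1)).filter fun i => a k i ≤ a k (i + 1)).card : ℝ) / k)
    Filter.atTop (nhds 1)

/-- Almost everywhere decreasing sequence of vectors. -/
def AEDecreasing (a : ℕ → ℕ → ℝ) : Prop :=
  Filter.Tendsto
    (fun k : ℕ => (((Finset.range (k - 1)).filter fun i => a k (i + 1) ≤ a k i).card : ℝ) / k)
    Filter.atTop (nhds 1)

/-- Almost everywhere monotone sequence of vectors. -/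
def AEMonotone (a : ℕ → ℕ → ℝ) : Prop :=
  AEIncreasing a ∨ AEDecreasing a

/-!
Near a site `s` the coefficients `a`, `b` of the Jacobi matrix `J` are almost constant, so the waves
`cos (pt)` and `sin (pt)`, cut off to a window of `m` sites after `s`, are approximate eigenvectors
of `J` for the value `a_s + 2 b_s cos t`. A Lipschitz `φ(J)` acts on them almost as a scalar, and
since these waves resolve the identity of the window when averaged over `t ∈ [0, π]`, the diagonal
entries `⟨e_p, φ(J) e_p⟩` summed over the window are close to `m` times the mean of
`φ(a_s + 2 b_s cos t)`. Sliding the window, each variation `|a_{i+1} - a_i|` is counted at most `m`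
times, so `Trace[φ(J)]` is the sum of these means up to `o(k)`; large values of `b_s` occur at so
few sites that the trivial bound suffices there.

By Prokhorov's theorem the empirical measures of the points `(a_j, b_j)` converge along a
subsequence to some `μ`. The trace comparison says that the spectral measures then converge, against
Lipschitz functions and hence weakly, to the law of `x + 2y cos t` under `μ` and uniform `t`.
-/

section SpectralForm

variable {𝕜 n : Type*} [RCLike 𝕜] [Fintype n] [DecidableEq n] {A : Matrix n n 𝕜}

/-- The quadratic form `v ↦ ⟨v, φ(A) v⟩` of the functional calculus of a Hermitian matrix `A`,
written in an orthonormal eigenbasis, so that it makes sense for every `φ`. -/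
def spectralForm (hA : A.IsHermitian) (φ : ℝ → ℝ) (v : EuclideanSpace 𝕜 n) : ℝ :=
  ∑ i, φ (hA.eigenvalues i) * ‖inner 𝕜 (hA.eigenvectorBasis i) v‖ ^ 2

theorem sum_spectralForm_single (hA : A.IsHermitian) (φ : ℝ → ℝ) :
    ∑ p, spectralForm hA φ (EuclideanSpace.single p 1) = ∑ i, φ (hA.eigenvalues i) := by
  simp only [spectralForm]
  rw [Finset.sum_comm]
  refine Finset.sum_congr rfl fun i _ => ?_
  have hnorm : ∑ p, ‖hA.eigenvectorBasis i p‖ ^ 2 = 1 := by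
    rw [← EuclideanSpace.norm_sq_eq, hA.eigenvectorBasis.norm_eq_one, one_pow]
  simp only [EuclideanSpace.inner_single_right, one_mul, RCLike.norm_conj, ← Finset.mul_sum,
    hnorm, mul_one]

theorem abs_spectralForm_le (hA : A.IsHermitian) {φ : ℝ → ℝ} {C : ℝ} (hφ : ∀ x, |φ x| ≤ C)
    (v : EuclideanSpace 𝕜 n) : |spectralForm hA φ v| ≤ C * ‖v‖ ^ 2 := by
  rw [← hA.eigenvectorBasis.sum_sq_norm_inner_right v, Finset.mul_sum]
  refine (Finset.abs_sum_le_sum_abs _ _).trans (Finset.sum_le_sum fun i _ => ?_)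
  rw [abs_mul, abs_sq]
  exact mul_le_mul_of_nonneg_right (hφ _) (sq_nonneg _)

theorem inner_eigenvectorBasis_toEuclideanLin (hA : A.IsHermitian) (i : n)
    (v : EuclideanSpace 𝕜 n) :
    inner 𝕜 (hA.eigenvectorBasis i) (A.toEuclideanLin v) =
      hA.eigenvalues i * inner 𝕜 (hA.eigenvectorBasis i) v := by
  have heigen : A.toEuclideanLin (hA.eigenvectorBasis i) =
      (hA.eigenvalues i : 𝕜) • hA.eigenvectorBasis i := by
    ext p
    simp [hA.mulVec_eigenvectorBasis, RCLike.real_smul_eq_coe_mul]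
  rw [← Matrix.isSymmetric_toEuclideanLin_iff.mpr hA, heigen, inner_smul_left, RCLike.conj_ofReal]

-- An approximate eigenvector for `x` sees `φ(A)` as multiplication by `φ x`.
theorem abs_spectralForm_sub_le (hA : A.IsHermitian) {φ : ℝ → ℝ} {K : NNReal}
    (hφ : LipschitzWith K φ) (x : ℝ) (v : EuclideanSpace 𝕜 n) :
    |spectralForm hA φ v - φ x * ‖v‖ ^ 2| ≤
      K * (‖v‖ * ‖A.toEuclideanLin v - (x : 𝕜) • v‖) := by
  set e := hA.eigenvectorBasis
  set r := A.toEuclideanLin v - (x : 𝕜) • v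
  have hr : ∀ i, ‖inner 𝕜 (e i) r‖ = |hA.eigenvalues i - x| * ‖inner 𝕜 (e i) v‖ := by
    intro i
    rw [inner_sub_right, inner_eigenvectorBasis_toEuclideanLin, inner_smul_right, ← sub_mul,
      norm_mul, ← RCLike.ofReal_sub, RCLike.norm_ofReal]
  have hsqrt : ∀ w, √(∑ i, ‖inner 𝕜 (e i) w‖ ^ 2) = ‖w‖ := fun w => by
    rw [e.sum_sq_norm_inner_right, Real.sqrt_sq (norm_nonneg w)]
  calc |spectralForm hA φ v - φ x * ‖v‖ ^ 2|
      = |∑ i, (φ (hA.eigenvalues i) - φ x) * ‖inner 𝕜 (e i) v‖ ^ 2| := by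
        simp only [sub_mul, Finset.sum_sub_distrib, ← Finset.mul_sum, e.sum_sq_norm_inner_right,
          spectralForm, e]
    _ ≤ ∑ i, K * (‖inner 𝕜 (e i) v‖ * ‖inner 𝕜 (e i) r‖) := by
        refine (Finset.abs_sum_le_sum_abs _ _).trans (Finset.sum_le_sum fun i _ => ?_)
        rw [hr, abs_mul, abs_sq]
        calc |φ (hA.eigenvalues i) - φ x| * ‖inner 𝕜 (e i) v‖ ^ 2
            ≤ K * |hA.eigenvalues i - x| * ‖inner 𝕜 (e i) v‖ ^ 2 :=
              mul_le_mul_of_nonneg_right (hφ.dist_le_mul _ _) (sq_nonneg _)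
          _ = _ := by ring
    _ ≤ K * (‖v‖ * ‖r‖) := by
        rw [← Finset.mul_sum, ← hsqrt v, ← hsqrt r]
        exact mul_le_mul_of_nonneg_left (Real.sum_mul_le_sqrt_mul_sqrt _ _ _) K.2

end SpectralForm

section PlaneWaves

theorem integral_cos_natCast_sub_mul (p q : ℕ) :
    ∫ t in (0 : ℝ)..Real.pi, Real.cos (((p : ℝ) - q) * t) = if p = q then Real.pi else 0 := by
  split_ifs with h
  · simp [h]
  · have hne : (p : ℝ) - q ≠ 0 := sub_ne_zero.mpr (Nat.cast_injective.ne h)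
    have hsin : Real.sin (((p : ℝ) - q) * Real.pi) = 0 := by
      exact_mod_cast Real.sin_int_mul_pi ((p : ℤ) - q)
    rw [intervalIntegral.integral_comp_mul_left Real.cos hne]
    simp [hsin]

theorem integral_sq_sum_cos_add_sq_sum_sin (B : Finset ℕ) (x : ℕ → ℝ) :
    ∫ t in (0 : ℝ)..Real.pi,
      ((∑ p ∈ B, Real.cos (p * t) * x p) ^ 2 + (∑ p ∈ B, Real.sin (p * t) * x p) ^ 2) =
      Real.pi * ∑ p ∈ B, x p ^ 2 := by
  have hexpand : ∀ t : ℝ,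
      (∑ p ∈ B, Real.cos (p * t) * x p) ^ 2 + (∑ p ∈ B, Real.sin (p * t) * x p) ^ 2 =
        ∑ p ∈ B, ∑ q ∈ B, x p * x q * Real.cos (((p : ℝ) - q) * t) := by
    intro t
    simp only [sq, Finset.sum_mul_sum, ← Finset.sum_add_distrib, sub_mul, Real.cos_sub]
    exact Finset.sum_congr rfl fun p _ => Finset.sum_congr rfl fun q _ => by ring
  simp_rw [hexpand]
  rw [intervalIntegral.integral_finsetSum fun p _ =>
    Continuous.intervalIntegrable (by fun_prop) _ _, Finset.mul_sum]
  refine Finset.sum_congr rfl fun p hp => ?_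
  rw [intervalIntegral.integral_finsetSum fun q _ =>
    Continuous.intervalIntegrable (by fun_prop) _ _]
  simp only [intervalIntegral.integral_const_mul, integral_cos_natCast_sub_mul, mul_ite, mul_zero,
    Finset.sum_ite_eq, if_pos hp]
  ring

variable {n : Type*} [Fintype n] [DecidableEq n] {A : Matrix n n ℝ}

theorem continuous_spectralForm (hA : A.IsHermitian) (φ : ℝ → ℝ) :
    Continuous (spectralForm hA φ) := by
  unfold spectralForm
  fun_prop

-- The waves `∑ p ∈ B, e^{ipt} d p`, averaged over `t`, resolve the identity of `span d` over `B`.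
theorem integral_spectralForm_waves (hA : A.IsHermitian) (φ : ℝ → ℝ) (B : Finset ℕ)
    (d : ℕ → EuclideanSpace ℝ n) :
    ∫ t in (0 : ℝ)..Real.pi, (spectralForm hA φ (∑ p ∈ B, Real.cos (p * t) • d p) +
      spectralForm hA φ (∑ p ∈ B, Real.sin (p * t) • d p)) =
      Real.pi * ∑ p ∈ B, spectralForm hA φ (d p) := by
  simp only [spectralForm, inner_sum, inner_smul_right, Real.norm_eq_abs, sq_abs,
    ← Finset.sum_add_distrib, ← mul_add]
  rw [intervalIntegral.integral_finsetSum fun i _ =>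
    Continuous.intervalIntegrable (by fun_prop) _ _, Finset.sum_comm, Finset.mul_sum]
  refine Finset.sum_congr rfl fun i _ => ?_
  rw [intervalIntegral.integral_const_mul, integral_sq_sum_cos_add_sq_sum_sin, ← Finset.mul_sum]
  ring

end PlaneWaves

section Truncation

/-- The first `k` terms of a real sequence, as a vector of the Euclidean space `ℝᵏ`. -/
def truncate (k : ℕ) : (ℕ → ℝ) →ₗ[ℝ] EuclideanSpace ℝ (Fin k) :=
  (WithLp.linearEquiv 2 ℝ (Fin k → ℝ)).symm.toLinearMap ∘ₗ LinearMap.funLeft ℝ ℝ Fin.val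

@[simp]
theorem truncate_apply (k : ℕ) (v : ℕ → ℝ) (p : Fin k) : truncate k v p = v p :=
  rfl

theorem truncate_single (k : ℕ) (p : Fin k) :
    truncate k (Pi.single (p : ℕ) 1) = EuclideanSpace.single p 1 := by
  ext q
  simp [Pi.single_apply, Fin.ext_iff]

theorem norm_truncate_sq (k : ℕ) (v : ℕ → ℝ) :
    ‖truncate k v‖ ^ 2 = ∑ p ∈ Finset.range k, v p ^ 2 := by
  simp [EuclideanSpace.norm_sq_eq, ← Fin.sum_univ_eq_sum_range]

theorem norm_truncate_le (k : ℕ) {v : ℕ → ℝ} {B : Finset ℕ} {c : ℝ} (hc : 0 ≤ c)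
    (hsupp : ∀ p ∉ B, v p = 0) (hv : ∀ p ∈ B, |v p| ≤ c) : ‖truncate k v‖ ≤ √B.card * c := by
  refine abs_le_of_sq_le_sq' ?_ (by positivity) |>.2
  calc ‖truncate k v‖ ^ 2 = ∑ p ∈ Finset.range k, v p ^ 2 := norm_truncate_sq k v
    _ = ∑ p ∈ Finset.range k ∩ B, v p ^ 2 := by
        refine (Finset.sum_subset Finset.inter_subset_left fun p hp hpB => ?_).symm
        rw [hsupp p fun h => hpB (Finset.mem_inter.mpr ⟨hp, h⟩), zero_pow two_ne_zero]
    _ ≤ ∑ p ∈ B, v p ^ 2 :=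
        Finset.sum_le_sum_of_subset_of_nonneg Finset.inter_subset_right fun _ _ _ => sq_nonneg _
    _ ≤ ∑ _p ∈ B, c ^ 2 :=
        Finset.sum_le_sum fun p hp => sq_le_sq.mpr ((hv p hp).trans (le_abs_self c))
    _ = (√B.card * c) ^ 2 := by
        rw [Finset.sum_const, nsmul_eq_mul, mul_pow, Real.sq_sqrt (Nat.cast_nonneg _)]

theorem sum_smul_truncate_single (k : ℕ) (B : Finset ℕ) (f : ℕ → ℝ) :
    ∑ p ∈ B, f p • truncate k (Pi.single p 1) = truncate k ((B : Set ℕ).indicator f) := by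
  simp_rw [← map_smul, ← map_sum]
  congr 1
  ext q
  simp [Set.indicator, Pi.single_apply]

-- At `p = 0` the term `b (p - 1) * v (p - 1)` is `b 0 * v 0`, which `hv₀` kills.
theorem jacobiMatrix_toEuclideanLin_truncate (k : ℕ) (a b : ℕ → ℝ) {v : ℕ → ℝ} (hv₀ : v 0 = 0)
    (hvk : v k = 0) :
    (jacobiMatrix k a b).toEuclideanLin (truncate k v) =
      truncate k fun p => a p * v p + b p * v (p + 1) + b (p - 1) * v (p - 1) := by
  ext p
  have hentry : ∀ q : Fin k, jacobiMatrix k a b p q * v q =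
      (if (p : ℕ) = q then a q * v q else 0) + (if (p : ℕ) + 1 = q then b p * v q else 0) +
        (if (p : ℕ) - 1 = q then b q * v q else 0) := by
    intro q
    simp only [jacobiMatrix, Matrix.of_apply]
    rcases Nat.eq_zero_or_pos p with hp | hp
    · by_cases hq : (q : ℕ) = 0 <;> simp_all [eq_comm]
    · split_ifs <;> first | omega | simp_all
  have hp := p.2
  have hnext : (if (p : ℕ) + 1 < k then b p * v (p + 1) else 0) = b p * v (p + 1) := by
    split_ifs with h
    · rfl
    · rw [show (p : ℕ) + 1 = k by omega, hvk, mul_zero]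
  have hsum := Fin.sum_univ_eq_sum_range (fun q => (if (p : ℕ) = q then a q * v q else 0) +
    (if (p : ℕ) + 1 = q then b p * v q else 0) + (if (p : ℕ) - 1 = q then b q * v q else 0)) k
  simp only [Finset.sum_add_distrib, Finset.sum_ite_eq, Finset.mem_range, hp, if_true,
    (Nat.sub_le _ _).trans_lt hp, hnext] at hsum
  simpa [Matrix.mulVec, dotProduct, hentry, Finset.sum_add_distrib] using hsum

end Truncation

section Windows

/-- The variation `∑ |a (i + 1) - a i|` of a sequence over a set `B` of indices `i`. -/
def variationOn (a : ℕ → ℝ) (B : Finset ℕ) : ℝ :=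
  ∑ i ∈ B, |a (i + 1) - a i|

theorem variationOn_nonneg (a : ℕ → ℝ) (B : Finset ℕ) : 0 ≤ variationOn a B :=
  Finset.sum_nonneg fun _ _ => abs_nonneg _

theorem abs_sub_le_variationOn_Ico (a : ℕ → ℝ) {s p m : ℕ} (hsp : s ≤ p) (hpm : p ≤ s + m) :
    |a p - a s| ≤ variationOn a (Finset.Ico s (s + m)) := by
  rw [← Finset.sum_Ico_sub a hsp]
  exact (Finset.abs_sum_le_sum_abs _ _).trans (Finset.sum_le_sum_of_subset_of_nonneg
    (Finset.Ico_subset_Ico_right hpm) fun _ _ _ => abs_nonneg _)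

theorem norm_truncate_freeze_le (k : ℕ) (d : ℕ → ℝ) {w : ℕ → ℝ} (hw : ∀ p, |w p| ≤ 1)
    {s m : ℕ} {σ τ : ℕ → ℕ} {B : Finset ℕ} (hB : B.card = m) (hτ : ∀ p ∉ B, w (τ p) = 0)
    (hσ : ∀ p ∈ B, s ≤ σ p ∧ σ p ≤ s + m) :
    ‖truncate k fun p => (d (σ p) - d s) * w (τ p)‖ ≤
      √m * variationOn d (Finset.Ico s (s + m)) := by
  rw [← hB]
  refine norm_truncate_le k (variationOn_nonneg _ _) (fun p hp => by rw [hτ p hp, mul_zero])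
    fun p hp => ?_
  rw [abs_mul, hB]
  exact (mul_le_of_le_one_right (abs_nonneg _) (hw _)).trans
    (abs_sub_le_variationOn_Ico d (hσ p hp).1 (hσ p hp).2)

theorem norm_jacobi_sub_frozen_le (a b : ℕ → ℝ) {k s m : ℕ} (hk : s + m < k) {w : ℕ → ℝ}
    (hsupp : ∀ p ∉ Finset.Ioc s (s + m), w p = 0) (hw : ∀ p, |w p| ≤ 1) :
    ‖(jacobiMatrix k a b).toEuclideanLin (truncate k w) -
        truncate k (fun p => a s * w p + b s * (w (p + 1) + w (p - 1)))‖ ≤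
      √m * (variationOn a (Finset.Ico s (s + m)) + 2 * variationOn b (Finset.Ico s (s + m))) := by
  have hdiag := norm_truncate_freeze_le k a hw (s := s) (m := m) (σ := fun p => p)
    (τ := fun p => p) (B := Finset.Ioc s (s + m)) (by simp) hsupp
    fun p hp => by simp only [Finset.mem_Ioc] at hp; omega
  have hnext := norm_truncate_freeze_le k b hw (s := s) (m := m) (σ := fun p => p)
    (τ := fun p => p + 1) (B := Finset.Ico s (s + m)) (by simp)
    (fun p hp => hsupp _ (by simp only [Finset.mem_Ico, Finset.mem_Ioc] at hp ⊢; omega))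
    fun p hp => by simp only [Finset.mem_Ico] at hp; omega
  have hprev := norm_truncate_freeze_le k b hw (s := s) (m := m) (σ := fun p => p - 1)
    (τ := fun p => p - 1) (B := Finset.Ioc (s + 1) (s + m + 1)) (by simp)
    (fun p hp => hsupp _ (by simp only [Finset.mem_Ioc] at hp ⊢; omega))
    fun p hp => by simp only [Finset.mem_Ioc] at hp; omega
  have hsplit : (jacobiMatrix k a b).toEuclideanLin (truncate k w) -
        truncate k (fun p => a s * w p + b s * (w (p + 1) + w (p - 1))) =
      truncate k (fun p => (a p - a s) * w p) + truncate k (fun p => (b p - b s) * w (p + 1)) +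
        truncate k (fun p => (b (p - 1) - b s) * w (p - 1)) := by
    rw [jacobiMatrix_toEuclideanLin_truncate k a b (hsupp 0 (by simp)) (hsupp k (by simp [hk]))]
    ext p
    simp only [PiLp.sub_apply, PiLp.add_apply, truncate_apply]
    ring
  rw [hsplit]
  linarith [norm_add₃_le (a := truncate k fun p => (a p - a s) * w p)
    (b := truncate k fun p => (b p - b s) * w (p + 1))
    (c := truncate k fun p => (b (p - 1) - b s) * w (p - 1))]

variable {f : ℕ → ℝ} {c : ℝ}

theorem window_defect_eq_zero (hrec : ∀ p, f p + f (p + 2) = 2 * c * f (p + 1)) {s m p : ℕ}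
    (hp : p ∉ ({s, s + 1, s + m, s + m + 1} : Finset ℕ)) :
    let v := (Finset.Ioc s (s + m) : Set ℕ).indicator f
    v (p + 1) + v (p - 1) - 2 * c * v p = 0 := by
  simp only [Finset.mem_insert, Finset.mem_singleton, not_or] at hp
  simp only [Set.indicator_apply, Finset.mem_coe, Finset.mem_Ioc]
  by_cases h : s < p ∧ p ≤ s + m
  · obtain ⟨q, rfl⟩ : ∃ q, p = q + 1 := ⟨p - 1, by omega⟩
    rw [if_pos (by omega), if_pos (by omega), if_pos h, Nat.add_sub_cancel]
    linear_combination hrec q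
  · rw [if_neg (by omega), if_neg (by omega), if_neg h]
    ring

theorem abs_window_defect_le (hf : ∀ p, |f p| ≤ 1)
    (hrec : ∀ p, f p + f (p + 2) = 2 * c * f (p + 1)) (s m p : ℕ) :
    let v := (Finset.Ioc s (s + m) : Set ℕ).indicator f
    |v (p + 1) + v (p - 1) - 2 * c * v p| ≤ 2 := by
  intro v
  have hv : ∀ q, |v q| ≤ 1 := fun q => (norm_indicator_le_norm_self f q).trans (hf q)
  have hvf : ∀ q, |v q - f q| ≤ 1 := fun q => by
    by_cases h : q ∈ (Finset.Ioc s (s + m) : Set ℕ)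
    · rw [show v q = f q from Set.indicator_of_mem h f, sub_self, abs_zero]
      exact zero_le_one
    · rw [show v q = 0 from Set.indicator_of_notMem h f, zero_sub, abs_neg]
      exact hf q
  by_cases h : p ∈ (Finset.Ioc s (s + m) : Set ℕ)
  · obtain ⟨q, rfl⟩ : ∃ q, p = q + 1 :=
      ⟨p - 1, by simp only [Finset.mem_coe, Finset.mem_Ioc] at h; omega⟩
    rw [show v (q + 1) = f (q + 1) from Set.indicator_of_mem h f, Nat.add_sub_cancel,
      show v (q + 1 + 1) + v q - 2 * c * f (q + 1) = (v (q + 2) - f (q + 2)) + (v q - f q) by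
        linear_combination hrec q]
    exact (abs_add_le _ _).trans (by linarith [hvf (q + 2), hvf q])
  · rw [show v p = 0 from Set.indicator_of_notMem h f, mul_zero, sub_zero]
    exact (abs_add_le _ _).trans (by linarith [hv (p + 1), hv (p - 1)])

-- The free Jacobi operator maps the wave `f` to `2c f`, so a windowed wave only fails to be an
-- eigenvector at the two ends of the window.
theorem norm_truncate_window_defect_le (k s m : ℕ) (hf : ∀ p, |f p| ≤ 1)
    (hrec : ∀ p, f p + f (p + 2) = 2 * c * f (p + 1)) :
    let v := (Finset.Ioc s (s + m) : Set ℕ).indicator f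
    ‖truncate k fun p => v (p + 1) + v (p - 1) - 2 * c * v p‖ ≤ 4 := by
  have hcard : √(({s, s + 1, s + m, s + m + 1} : Finset ℕ).card : ℝ) ≤ 2 :=
    Real.sqrt_le_iff.mpr ⟨by norm_num, by norm_num; exact_mod_cast Finset.card_le_four⟩
  refine (norm_truncate_le k zero_le_two (fun p hp => window_defect_eq_zero hrec hp)
    fun p _ => abs_window_defect_le hf hrec s m p).trans ?_
  linarith

theorem norm_jacobi_window_sub_le (a b : ℕ → ℝ) {k s m : ℕ} (hk : s + m < k)
    (hf : ∀ p, |f p| ≤ 1) (hrec : ∀ p, f p + f (p + 2) = 2 * c * f (p + 1)) :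
    let v := truncate k ((Finset.Ioc s (s + m) : Set ℕ).indicator f)
    ‖(jacobiMatrix k a b).toEuclideanLin v - (a s + 2 * b s * c) • v‖ ≤
      √m * (variationOn a (Finset.Ico s (s + m)) + 2 * variationOn b (Finset.Ico s (s + m))) +
        4 * |b s| := by
  intro v
  let w := (Finset.Ioc s (s + m) : Set ℕ).indicator f
  have hw : ∀ p, |w p| ≤ 1 := fun p =>
    (norm_indicator_le_norm_self f p).trans (hf p)
  have hfrozen : truncate k (fun p => a s * w p + b s * (w (p + 1) + w (p - 1))) =
      (a s + 2 * b s * c) • v + b s • truncate k fun p => w (p + 1) + w (p - 1) - 2 * c * w p := by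
    change _ = (a s + 2 * b s * c) • truncate k w + _
    ext p
    simp only [PiLp.add_apply, PiLp.smul_apply, truncate_apply, smul_eq_mul]
    ring
  have hres := norm_jacobi_sub_frozen_le a b hk
    (fun p hp => Set.indicator_of_notMem (by exact_mod_cast hp) f) hw
  have hdefect := mul_le_mul_of_nonneg_left (norm_truncate_window_defect_le k s m hf hrec)
    (abs_nonneg (b s))
  rw [hfrozen, ← sub_sub] at hres
  have htri := norm_le_norm_sub_add ((jacobiMatrix k a b).toEuclideanLin v -
    (a s + 2 * b s * c) • v) (b s • truncate k fun p => w (p + 1) + w (p - 1) - 2 * c * w p)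
  rw [norm_smul, Real.norm_eq_abs] at htri
  linarith

end Windows

section LocalLaw

/-- The mean of `φ` over the symbol `t ↦ x + 2y cos t` on `[0, π]` of the Jacobi operator with
constant coefficients `p = (x, y)`. -/
def symbolMean (φ : ℝ → ℝ) (p : ℝ × ℝ) : ℝ :=
  (1 / Real.pi) * ∫ t in (0 : ℝ)..Real.pi, φ (p.1 + 2 * p.2 * Real.cos t)

/-- The diagonal entry `⟨e_p, φ(J(a, b)) e_p⟩`, the contribution of site `p < k` to the trace of
`φ(J(a, b))`; it is `0` for `p ≥ k`. -/
def localDensity (k : ℕ) (a b : ℕ → ℝ) (φ : ℝ → ℝ) (p : ℕ) : ℝ :=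
  spectralForm (jacobiMatrix_isHermitian k a b) φ (truncate k (Pi.single p 1))

variable {φ : ℝ → ℝ} {C : ℝ} {K : NNReal} (k : ℕ) (a b : ℕ → ℝ)

theorem sum_localDensity (φ : ℝ → ℝ) :
    ∑ p ∈ Finset.range k, localDensity k a b φ p = jacobiTrace k a b φ := by
  simp only [← Fin.sum_univ_eq_sum_range, localDensity, truncate_single, sum_spectralForm_single,
    jacobiTrace]

theorem abs_localDensity_le (hφ : ∀ x, |φ x| ≤ C) (p : ℕ) : |localDensity k a b φ p| ≤ C := by
  have hnorm : ‖truncate k (Pi.single p 1)‖ ≤ 1 := by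
    have h := norm_truncate_le k (v := Pi.single p 1) (B := {p}) zero_le_one
      (fun q hq => Pi.single_eq_of_ne (by simpa using hq) _) (by simp)
    simpa using h
  refine (abs_spectralForm_le _ hφ _).trans (mul_le_of_le_one_right ?_ ?_)
  · exact (abs_nonneg _).trans (hφ 0)
  · exact pow_le_one₀ (norm_nonneg _) hnorm

theorem continuous_symbolMean (hφ : Continuous φ) : Continuous (symbolMean φ) := by
  refine continuous_const.mul
    (intervalIntegral.continuous_parametric_intervalIntegral_of_continuous' ?_ _ _)
  fun_prop

theorem abs_symbolMean_le (hφ : ∀ x, |φ x| ≤ C) (p : ℝ × ℝ) : |symbolMean φ p| ≤ C := by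
  have h := intervalIntegral.norm_integral_le_of_norm_le_const (a := 0) (b := Real.pi)
    (f := fun t => φ (p.1 + 2 * p.2 * Real.cos t)) (C := C) fun t _ => hφ _
  rw [sub_zero, abs_of_pos Real.pi_pos, Real.norm_eq_abs] at h
  rw [symbolMean, abs_mul, abs_of_pos (one_div_pos.mpr Real.pi_pos), one_div_mul_eq_div]
  exact (div_le_iff₀ Real.pi_pos).mpr h

variable {k a b} {s m : ℕ}

theorem abs_spectralForm_window_sub_le (hφ : LipschitzWith K φ) (hk : s + m < k) {f : ℕ → ℝ}
    {c : ℝ} (hf : ∀ p, |f p| ≤ 1) (hrec : ∀ p, f p + f (p + 2) = 2 * c * f (p + 1)) :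
    let v := truncate k ((Finset.Ioc s (s + m) : Set ℕ).indicator f)
    |spectralForm (jacobiMatrix_isHermitian k a b) φ v - φ (a s + 2 * b s * c) * ‖v‖ ^ 2| ≤
      K * (m * (variationOn a (Finset.Ico s (s + m)) +
        2 * variationOn b (Finset.Ico s (s + m))) + 4 * √m * |b s|) := by
  intro v
  have hv : ‖v‖ ≤ √m := by
    have h := norm_truncate_le k zero_le_one
      (fun p hp => Set.indicator_of_notMem (s := Finset.Ioc s (s + m)) (by exact_mod_cast hp) f)
      fun p _ => (norm_indicator_le_norm_self f p).trans (hf p)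
    simpa [v] using h
  refine (abs_spectralForm_sub_le _ hφ _ v).trans (mul_le_mul_of_nonneg_left ?_ K.2)
  calc _ ≤ √m * (√m * (variationOn a (Finset.Ico s (s + m)) +
        2 * variationOn b (Finset.Ico s (s + m))) + 4 * |b s|) :=
        mul_le_mul hv (norm_jacobi_window_sub_le a b hk hf hrec) (norm_nonneg _)
          (Real.sqrt_nonneg _)
    _ = _ := by
        rw [mul_add, ← mul_assoc, Real.mul_self_sqrt (Nat.cast_nonneg m)]
        ring

theorem cos_natCast_mul_add_cos_natCast_mul (t : ℝ) (p : ℕ) :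
    Real.cos (p * t) + Real.cos ((p + 2 : ℕ) * t) =
      2 * Real.cos t * Real.cos ((p + 1 : ℕ) * t) := by
  rw [show (p : ℝ) * t = (p + 1 : ℕ) * t - t by push_cast; ring,
    show ((p + 2 : ℕ) : ℝ) * t = (p + 1 : ℕ) * t + t by push_cast; ring, Real.cos_sub, Real.cos_add]
  ring

theorem sin_natCast_mul_add_sin_natCast_mul (t : ℝ) (p : ℕ) :
    Real.sin (p * t) + Real.sin ((p + 2 : ℕ) * t) =
      2 * Real.cos t * Real.sin ((p + 1 : ℕ) * t) := by
  rw [show (p : ℝ) * t = (p + 1 : ℕ) * t - t by push_cast; ring,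
    show ((p + 2 : ℕ) : ℝ) * t = (p + 1 : ℕ) * t + t by push_cast; ring, Real.sin_sub, Real.sin_add]
  ring

theorem sq_norm_cos_window_add_sq_norm_sin_window (hk : s + m < k) (t : ℝ) :
    ‖truncate k ((Finset.Ioc s (s + m) : Set ℕ).indicator fun p => Real.cos (p * t))‖ ^ 2 +
      ‖truncate k ((Finset.Ioc s (s + m) : Set ℕ).indicator fun p => Real.sin (p * t))‖ ^ 2 =
      m := by
  have hsub : Finset.Ioc s (s + m) ⊆ Finset.range k := fun p hp => by
    simp only [Finset.mem_Ioc, Finset.mem_range] at hp ⊢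
    omega
  simp only [norm_truncate_sq, ← Finset.sum_add_distrib]
  calc _ = ∑ p ∈ Finset.Ioc s (s + m), (Real.cos (p * t) ^ 2 + Real.sin (p * t) ^ 2) := by
        rw [← Finset.sum_subset hsub fun p _ hp => by
          simp only [Set.indicator_of_notMem (mt Finset.mem_coe.mp hp)]
          norm_num]
        exact Finset.sum_congr rfl fun p hp => by
          simp only [Set.indicator_of_mem (Finset.mem_coe.mpr hp)]
    _ = m := by simp [Real.cos_sq_add_sin_sq]

theorem abs_spectralForm_waves_sub_le (hφ : LipschitzWith K φ) (hk : s + m < k) (t : ℝ) :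
    |spectralForm (jacobiMatrix_isHermitian k a b) φ
          (∑ p ∈ Finset.Ioc s (s + m), Real.cos (p * t) • truncate k (Pi.single p 1)) +
        spectralForm (jacobiMatrix_isHermitian k a b) φ
          (∑ p ∈ Finset.Ioc s (s + m), Real.sin (p * t) • truncate k (Pi.single p 1)) -
        m * φ (a s + 2 * b s * Real.cos t)| ≤
      2 * K * (m * (variationOn a (Finset.Ico s (s + m)) +
        2 * variationOn b (Finset.Ico s (s + m))) + 4 * √m * |b s|) := by
  have hcos := abs_spectralForm_window_sub_le (a := a) (b := b) hφ hk
    (fun p => Real.abs_cos_le_one (p * t)) (cos_natCast_mul_add_cos_natCast_mul t)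
  have hsin := abs_spectralForm_window_sub_le (a := a) (b := b) hφ hk
    (fun p => Real.abs_sin_le_one (p * t)) (sin_natCast_mul_add_sin_natCast_mul t)
  have hmass := congrArg (φ (a s + 2 * b s * Real.cos t) * ·)
    (sq_norm_cos_window_add_sq_norm_sin_window hk t)
  rw [sum_smul_truncate_single, sum_smul_truncate_single]
  rw [abs_le] at hcos hsin ⊢
  constructor <;> linarith

theorem abs_sum_localDensity_window_sub_le (hφ : LipschitzWith K φ) (hk : s + m < k) :
    |∑ p ∈ Finset.Ioc s (s + m), localDensity k a b φ p - m * symbolMean φ (a s, b s)| ≤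
      2 * K * (m * (variationOn a (Finset.Ico s (s + m)) +
        2 * variationOn b (Finset.Ico s (s + m))) + 4 * √m * |b s|) := by
  have hform := continuous_spectralForm (jacobiMatrix_isHermitian k a b) φ
  have hcont := hφ.continuous
  have hint := intervalIntegral.norm_integral_le_of_norm_le_const (a := 0) (b := Real.pi)
    fun t _ => (Real.norm_eq_abs _).trans_le
      (abs_spectralForm_waves_sub_le (a := a) (b := b) hφ hk t)
  rw [intervalIntegral.integral_sub (Continuous.intervalIntegrable (by fun_prop) _ _)
    (Continuous.intervalIntegrable (by fun_prop) _ _), integral_spectralForm_waves,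
    intervalIntegral.integral_const_mul, sub_zero, abs_of_pos Real.pi_pos] at hint
  refine le_of_mul_le_mul_right (le_of_eq_of_le ?_ hint) Real.pi_pos
  rw [Real.norm_eq_abs, ← abs_of_pos Real.pi_pos, ← abs_mul, abs_of_pos Real.pi_pos]
  congr 1
  simp only [symbolMean, localDensity]
  field_simp

end LocalLaw

section SlidingWindows

theorem sum_sum_Ico_add_comm (f : ℕ → ℝ) (l m : ℕ) :
    ∑ s ∈ Finset.range l, ∑ p ∈ Finset.Ico s (s + m), f p =
      ∑ i ∈ Finset.range m, ∑ p ∈ Finset.Ico i (i + l), f p := by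
  simp only [Finset.sum_Ico_eq_sum_range, Nat.add_sub_cancel_left]
  rw [Finset.sum_comm]
  simp only [add_comm]

theorem sum_variationOn_Ico_le (a : ℕ → ℝ) (k m : ℕ) :
    ∑ s ∈ Finset.range (k - m), variationOn a (Finset.Ico s (s + m)) ≤
      m * variationOn a (Finset.range (k - 1)) := by
  simp only [variationOn]
  rw [sum_sum_Ico_add_comm fun i => |a (i + 1) - a i|]
  refine (Finset.sum_le_card_nsmul _ _ _ fun i hi => Finset.sum_le_sum_of_subset_of_nonneg
    (fun p hp => ?_) fun _ _ _ => abs_nonneg _).trans_eq (by rw [Finset.card_range, nsmul_eq_mul])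
  simp only [Finset.mem_Ico, Finset.mem_range] at hi hp ⊢
  omega

variable {f : ℕ → ℝ} {C : ℝ} {k m : ℕ}

theorem abs_sum_sub_sum_le_of_subset {ι : Type*} {f : ι → ℝ} (hf : ∀ i, |f i| ≤ C)
    {B D : Finset ι} (hBD : B ⊆ D) :
    |∑ i ∈ B, f i - ∑ i ∈ D, f i| ≤ (D.card - B.card) * C := by
  classical
  rw [← Finset.sum_sdiff hBD, sub_add_cancel_right, abs_neg,
    ← Nat.cast_sub (Finset.card_le_card hBD), ← Finset.card_sdiff_of_subset hBD, ← nsmul_eq_mul]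
  exact (Finset.abs_sum_le_sum_abs _ _).trans (Finset.sum_le_card_nsmul _ _ _ fun i _ => hf i)

theorem abs_sum_range_tsub_sub_sum_le (hf : ∀ p, |f p| ≤ C) (hmk : m ≤ k) :
    |∑ p ∈ Finset.range (k - m), f p - ∑ p ∈ Finset.range k, f p| ≤ m * C := by
  have h := abs_sum_sub_sum_le_of_subset hf
    (Finset.range_subset_range.mpr (Nat.sub_le k m))
  rwa [Finset.card_range, Finset.card_range, Nat.cast_sub hmk, sub_sub_cancel] at h

theorem abs_sum_sum_Ioc_sub_le (hf : ∀ p, |f p| ≤ C) (hmk : m ≤ k) :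
    |∑ s ∈ Finset.range (k - m), ∑ p ∈ Finset.Ioc s (s + m), f p -
        m * ∑ p ∈ Finset.range k, f p| ≤ m * (m * C) := by
  have hshift : ∀ s l, ∑ p ∈ Finset.Ioc s (s + l), f p = ∑ p ∈ Finset.Ico s (s + l), f (p + 1) :=
    fun s l => by rw [Finset.sum_Ico_add', Finset.Ico_add_one_add_one_eq_Ioc]
  have hstrip : ∀ i ∈ Finset.range m,
      |∑ p ∈ Finset.Ioc i (i + (k - m)), f p - ∑ p ∈ Finset.range k, f p| ≤ m * C := by
    intro i hi
    have h := abs_sum_sub_sum_le_of_subset hf (B := Finset.Ioc i (i + (k - m)))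
      (D := Finset.range k) fun p hp => by
        simp only [Finset.mem_Ioc, Finset.mem_range] at hi hp ⊢
        omega
    rwa [Finset.card_range, Nat.card_Ioc, Nat.add_sub_cancel_left, Nat.cast_sub hmk,
      sub_sub_cancel] at h
  calc _ = |∑ i ∈ Finset.range m,
        (∑ p ∈ Finset.Ioc i (i + (k - m)), f p - ∑ p ∈ Finset.range k, f p)| := by
        simp only [hshift, Finset.sum_sub_distrib, Finset.sum_const, Finset.card_range,
          nsmul_eq_mul]
        rw [sum_sum_Ico_add_comm fun p => f (p + 1)]
    _ ≤ m * (m * C) := by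
        refine (Finset.abs_sum_le_sum_abs _ _).trans
          ((Finset.sum_le_card_nsmul _ _ _ hstrip).trans_eq ?_)
        rw [Finset.card_range, nsmul_eq_mul]

end SlidingWindows

section TraceComparison

variable {φ : ℝ → ℝ} {C M : ℝ} {K : NNReal}

-- Windows based at a site with `M < |b s|` are only controlled by the trivial bound.
theorem abs_sum_localDensity_window_sub_le_add_ite {a b : ℕ → ℝ} {k s m : ℕ}
    (hφ : LipschitzWith K φ) (hC : ∀ x, |φ x| ≤ C) (hM : 0 ≤ M) (hk : s + m < k) :
    |∑ p ∈ Finset.Ioc s (s + m), localDensity k a b φ p - m * symbolMean φ (a s, b s)| ≤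
      2 * K * (m * (variationOn a (Finset.Ico s (s + m)) +
        2 * variationOn b (Finset.Ico s (s + m))) + 4 * √m * M) +
          if M < |b s| then 2 * m * C else 0 := by
  have ha := variationOn_nonneg a (Finset.Ico s (s + m))
  have hb := variationOn_nonneg b (Finset.Ico s (s + m))
  split_ifs with h
  · have hdensity : |∑ p ∈ Finset.Ioc s (s + m), localDensity k a b φ p| ≤ m * C := by
      refine (Finset.abs_sum_le_sum_abs _ _).trans ((Finset.sum_le_card_nsmul _ _ _ fun p _ =>
        abs_localDensity_le k a b hC p).trans_eq ?_)
      rw [Nat.card_Ioc, Nat.add_sub_cancel_left, nsmul_eq_mul]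
    have hmean : |m * symbolMean φ (a s, b s)| ≤ m * C := by
      rw [abs_mul, Nat.abs_cast]
      exact mul_le_mul_of_nonneg_left (abs_symbolMean_le hC _) (Nat.cast_nonneg m)
    refine (abs_sub _ _).trans (le_add_of_nonneg_of_le (by positivity) ?_)
    linarith
  · rw [add_zero]
    refine (abs_sum_localDensity_window_sub_le hφ hk).trans ?_
    gcongr
    exact not_lt.mp h

theorem sum_abs_sum_localDensity_window_sub_le (a b : ℕ → ℝ) (k m : ℕ)
    (hφ : LipschitzWith K φ) (hC : ∀ x, |φ x| ≤ C) (hM : 0 ≤ M) :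
    ∑ s ∈ Finset.range (k - m),
        |∑ p ∈ Finset.Ioc s (s + m), localDensity k a b φ p - m * symbolMean φ (a s, b s)| ≤
      2 * K * (m * (m * (variationOn a (Finset.range (k - 1)) +
        2 * variationOn b (Finset.range (k - 1)))) + 4 * √m * (k * M)) +
        2 * m * (((Finset.range k).filter fun p => M < |b p|).card * C) := by
  have hC₀ : 0 ≤ C := (abs_nonneg _).trans (hC 0)
  have hva := sum_variationOn_Ico_le a k m
  have hvb := sum_variationOn_Ico_le b k m
  have hk : ((k - m : ℕ) : ℝ) ≤ k := by exact_mod_cast Nat.sub_le k m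
  have hcard : (((Finset.range (k - m)).filter fun p => M < |b p|).card : ℝ) ≤
      ((Finset.range k).filter fun p => M < |b p|).card := by
    gcongr
    exact Nat.sub_le k m
  refine (Finset.sum_le_sum fun s hs => abs_sum_localDensity_window_sub_le_add_ite hφ hC hM
    (Nat.add_lt_of_lt_sub (Finset.mem_range.mp hs))).trans ?_
  simp only [Finset.sum_add_distrib, ← Finset.mul_sum, ← Finset.sum_filter, Finset.sum_const,
    Finset.card_range, nsmul_eq_mul]
  gcongr
  linarith

theorem abs_jacobiTrace_sub_sum_symbolMean_le (a b : ℕ → ℝ) {k m : ℕ}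
    (hφ : LipschitzWith K φ) (hC : ∀ x, |φ x| ≤ C) (hM : 0 ≤ M) (hm : 0 < m) (hmk : m ≤ k) :
    |jacobiTrace k a b φ - ∑ p ∈ Finset.range k, symbolMean φ (a p, b p)| ≤
      2 * m * C + 2 * K * m *
        (variationOn a (Finset.range (k - 1)) + 2 * variationOn b (Finset.range (k - 1))) +
        2 * C * ((Finset.range k).filter fun p => M < |b p|).card + 8 * K * M / √m * k := by
  have hm' : (0 : ℝ) < m := Nat.cast_pos.mpr hm
  have htrace := abs_sum_sum_Ioc_sub_le (abs_localDensity_le k a b hC) hmk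
  have hmean := mul_le_mul_of_nonneg_left (abs_sum_range_tsub_sub_sum_le
    (fun p => abs_symbolMean_le hC (a p, b p)) hmk) hm'.le
  have hlocal := (Finset.abs_sum_le_sum_abs _ _).trans
    (sum_abs_sum_localDensity_window_sub_le a b k m hφ hC hM)
  rw [Finset.sum_sub_distrib, ← Finset.mul_sum] at hlocal
  rw [sum_localDensity] at htrace
  rw [← abs_of_pos hm', ← abs_mul, abs_of_pos hm'] at hmean
  refine le_of_mul_le_mul_left ?_ hm'
  have hsqrt : m * (8 * K * M / √m * k) = 2 * K * (4 * √m * (k * M)) := by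
    calc _ = 8 * K * M * k * (m / √m) := by ring
      _ = _ := by rw [Real.div_sqrt]; ring
  rw [← abs_of_pos hm', ← abs_mul, abs_of_pos hm', mul_add, hsqrt]
  rw [abs_le] at *
  constructor <;> linarith

end TraceComparison

section Asymptotics

variable {a b : ℕ → ℕ → ℝ}

theorem jacobiTrace_sub_sum_symbolMean_isLittleO
    (ha : (fun k => variationOn (a k) (Finset.range (k - 1))) =o[atTop] fun k => (k : ℝ))
    (hb : (fun k => variationOn (b k) (Finset.range (k - 1))) =o[atTop] fun k => (k : ℝ))
    (hbtight : ∀ ε : ℝ, 0 < ε → ∃ M : ℝ, 0 < M ∧ ∀ᶠ k : ℕ in atTop,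
      (((Finset.range k).filter fun j => M < |b k j|).card : ℝ) / k < ε)
    {φ : ℝ → ℝ} {C : ℝ} {K : NNReal} (hφ : LipschitzWith K φ) (hC : ∀ x, |φ x| ≤ C) :
    (fun k => jacobiTrace k (a k) (b k) φ - ∑ p ∈ Finset.range k, symbolMean φ (a k p, b k p))
      =o[atTop] fun k => (k : ℝ) := by
  have hC₀ : 0 ≤ C := (abs_nonneg _).trans (hC 0)
  refine Asymptotics.isLittleO_iff.mpr fun ε hε => ?_
  obtain ⟨M, hM, hfar⟩ := hbtight (ε / 3 / (2 * C + 1)) (by positivity)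
  obtain ⟨m, hm₀, hm⟩ : ∃ m : ℕ, 0 < m ∧ 8 * K * M / √m ≤ ε / 3 := by
    have hlim : Tendsto (fun m : ℕ => 8 * K * M / √m) atTop (nhds 0) :=
      tendsto_const_nhds.div_atTop (Real.tendsto_sqrt_atTop.comp tendsto_natCast_atTop_atTop)
    exact ((eventually_gt_atTop 0).and (hlim.eventually_le_const (by positivity))).exists
  have hsmall : (fun k => 2 * m * C + 2 * K * m * (variationOn (a k) (Finset.range (k - 1)) +
      2 * variationOn (b k) (Finset.range (k - 1)))) =o[atTop] fun k => (k : ℝ) :=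
    ((Asymptotics.isLittleO_const_left.mpr (Or.inr
      (tendsto_norm_atTop_atTop.comp tendsto_natCast_atTop_atTop)))).add
      ((ha.add (hb.const_mul_left 2)).const_mul_left _)
  filter_upwards [hsmall.bound (by positivity : 0 < ε / 3), hfar, eventually_ge_atTop m,
    eventually_gt_atTop 0] with k hsmallk hfark hmk hk
  rw [div_lt_iff₀ (Nat.cast_pos.mpr hk), div_mul_eq_mul_div, lt_div_iff₀ (by positivity)] at hfark
  have hk' := mul_le_mul_of_nonneg_right hm (Nat.cast_nonneg k)
  rw [Real.norm_eq_abs, Real.norm_natCast] at hsmallk ⊢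
  refine (abs_jacobiTrace_sub_sum_symbolMean_le (a k) (b k) hφ hC hM.le hm₀ hmk).trans ?_
  linarith [le_abs_self (2 * m * C + 2 * K * m * (variationOn (a k) (Finset.range (k - 1)) +
      2 * variationOn (b k) (Finset.range (k - 1))))]

end Asymptotics

section EmpiricalMeasure

variable {ι Ω : Type*} [Fintype ι] [Nonempty ι] [MeasurableSpace Ω]

/-- The empirical measure `(1 / #ι) ∑ i, δ_{x i}` of a finite family of points. -/
def empiricalMeasure (x : ι → Ω) : ProbabilityMeasure Ω :=
  ⟨(Fintype.card ι : ENNReal)⁻¹ • ∑ i, Measure.dirac (x i), ⟨by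
    simp [ENNReal.inv_mul_cancel]⟩⟩

theorem integral_empiricalMeasure [MeasurableSingletonClass Ω] (x : ι → Ω) (f : Ω → ℝ) :
    ∫ ω, f ω ∂(empiricalMeasure x : Measure Ω) = (1 / (Fintype.card ι : ℝ)) * ∑ i, f (x i) := by
  rw [empiricalMeasure, ProbabilityMeasure.coe_mk, integral_smul_measure,
    integral_finsetSum_measure fun i _ => integrable_dirac (by simp)]
  simp

theorem real_empiricalMeasure (x : ι → Ω) {S : Set Ω} (hS : MeasurableSet S)
    [DecidablePred (· ∈ S)] :
    (empiricalMeasure x : Measure Ω).real S =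
      ((Finset.univ.filter fun i => x i ∈ S).card : ℝ) / Fintype.card ι := by
  simp [empiricalMeasure, measureReal_def, Measure.dirac_apply' _ hS, Set.indicator_apply,
    div_eq_inv_mul]

theorem isTightMeasureSet_range_of_eventually_le {E : Type*} [NormedAddCommGroup E]
    [ProperSpace E] [MeasurableSpace E] [BorelSpace E] {μ : ℕ → Measure E}
    [∀ n, IsFiniteMeasure (μ n)]
    (h : ∀ ε : ℝ, 0 < ε → ∃ M : ℝ, ∀ᶠ n in atTop, (μ n).real {x | M < ‖x‖} ≤ ε) :
    IsTightMeasureSet (Set.range μ) := by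
  refine isTightMeasureSet_range_of_tendsto_limsup_measure_norm_gt
    (ENNReal.tendsto_nhds_zero.mpr fun ε hε => ?_)
  obtain ⟨δ, hδ, hδε⟩ := ENNReal.lt_iff_exists_nnreal_btwn.mp hε
  obtain ⟨M, hM⟩ := h δ (by exact_mod_cast hδ)
  filter_upwards [eventually_ge_atTop M] with r hr
  refine limsup_le_of_le (h := hM.mono fun n hn => ?_)
  calc μ n {x | r < ‖x‖} ≤ μ n {x | M < ‖x‖} := measure_mono fun x hx => hr.trans_lt hx
    _ = ENNReal.ofReal ((μ n).real {x | M < ‖x‖}) := (ofReal_measureReal (measure_ne_top _ _)).symm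
    _ ≤ ε := (ENNReal.ofReal_le_of_le_toReal hn).trans (by simpa using hδε.le)

theorem card_filter_lt_norm_le (M : ℝ) (n : ℕ) (x y : ℕ → ℝ) :
    (Finset.univ.filter fun i : Fin n => M < ‖(x i, y i)‖).card ≤
      ((Finset.range n).filter fun j => M < |x j|).card +
        ((Finset.range n).filter fun j => M < |y j|).card := by
  simp only [Finset.card_filter, Prod.norm_mk, lt_sup_iff, Real.norm_eq_abs]
  rw [Fin.sum_univ_eq_sum_range (fun j => if M < |x j| ∨ M < |y j| then 1 else 0),
    ← Finset.card_filter, Finset.filter_or, ← Finset.card_filter, ← Finset.card_filter]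
  exact Finset.card_union_le _ _

theorem isTightMeasureSet_range_empiricalMeasure {a b : ℕ → ℕ → ℝ}
    (htight : ∀ ε : ℝ, 0 < ε → ∃ M : ℝ, 0 < M ∧ ∀ᶠ k : ℕ in atTop,
      (((Finset.range k).filter fun j => M < |a k j|).card : ℝ) / k < ε ∧
      (((Finset.range k).filter fun j => M < |b k j|).card : ℝ) / k < ε) :
    IsTightMeasureSet (Set.range fun n => ((empiricalMeasure fun i : Fin (n + 1) =>
      (a (n + 1) i, b (n + 1) i) : ProbabilityMeasure (ℝ × ℝ)) : Measure (ℝ × ℝ))) := by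
  refine isTightMeasureSet_range_of_eventually_le fun ε hε => ?_
  obtain ⟨M, -, hM⟩ := htight (ε / 2) (half_pos hε)
  refine ⟨M, ((tendsto_add_atTop_nat 1).eventually hM).mono fun n hn => ?_⟩
  rw [real_empiricalMeasure _ (measurableSet_lt measurable_const measurable_norm),
    Fintype.card_fin]
  refine (div_le_div_of_nonneg_right (Nat.cast_le.mpr (card_filter_lt_norm_le M (n + 1)
    (a (n + 1)) (b (n + 1)))) (Nat.cast_nonneg _)).trans ?_
  rw [Nat.cast_add, add_div]
  linarith

theorem exists_tendsto_empiricalMeasure {a b : ℕ → ℕ → ℝ}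
    (htight : ∀ ε : ℝ, 0 < ε → ∃ M : ℝ, 0 < M ∧ ∀ᶠ k : ℕ in atTop,
      (((Finset.range k).filter fun j => M < |a k j|).card : ℝ) / k < ε ∧
      (((Finset.range k).filter fun j => M < |b k j|).card : ℝ) / k < ε) :
    ∃ s : ℕ → ℕ, StrictMono s ∧ ∃ μ : ProbabilityMeasure (ℝ × ℝ),
      Tendsto (fun j => empiricalMeasure fun i : Fin (s j + 1) => (a (s j + 1) i, b (s j + 1) i))
        atTop (nhds μ) := by
  set ν : ℕ → ProbabilityMeasure (ℝ × ℝ) := fun n =>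
    empiricalMeasure fun i : Fin (n + 1) => (a (n + 1) i, b (n + 1) i)
  have hν : IsTightMeasureSet (Set.range fun n => (ν n : Measure (ℝ × ℝ))) :=
    isTightMeasureSet_range_empiricalMeasure htight
  have hcompact := isCompact_closure_of_isTightMeasureSet (S := Set.range ν) (by
    simpa [Set.range, Set.ext_iff] using hν)
  obtain ⟨μ, -, s, hs, hlim⟩ := hcompact.tendsto_subseq (x := ν)
    fun n => subset_closure (Set.mem_range_self n)
  exact ⟨s, hs, μ, hlim⟩

end EmpiricalMeasure

section SymbolMeasure

/-- The uniform distribution on `[0, π]`. -/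
def uniformPhase : ProbabilityMeasure ℝ :=
  ⟨ProbabilityTheory.cond volume (Set.Ioc 0 Real.pi),
    ProbabilityTheory.cond_isProbabilityMeasure_of_finite (by simp [Real.pi_pos]) (by simp)⟩

/-- The limiting spectral distribution attached to `μ`: the law of `x + 2y cos t` when `(x, y)` has
law `μ` and `t` is independent and uniform on `[0, π]`. -/
def symbolMeasure (μ : ProbabilityMeasure (ℝ × ℝ)) : ProbabilityMeasure ℝ :=
  (μ.prod uniformPhase).map
    (f := fun z : (ℝ × ℝ) × ℝ => z.1.1 + 2 * z.1.2 * Real.cos z.2) (by fun_prop)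

theorem integral_symbolMeasure (μ : ProbabilityMeasure (ℝ × ℝ)) {φ : ℝ → ℝ} (hφ : Continuous φ)
    {C : ℝ} (hC : ∀ x, |φ x| ≤ C) :
    ∫ x, φ x ∂(symbolMeasure μ : Measure ℝ) = ∫ p, symbolMean φ p ∂(μ : Measure (ℝ × ℝ)) := by
  have hsymbol : Continuous fun z : (ℝ × ℝ) × ℝ => z.1.1 + 2 * z.1.2 * Real.cos z.2 := by
    fun_prop
  have hint : Integrable (fun z : (ℝ × ℝ) × ℝ => φ (z.1.1 + 2 * z.1.2 * Real.cos z.2))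
      ((μ : Measure (ℝ × ℝ)).prod uniformPhase) :=
    Integrable.of_bound (hφ.comp hsymbol).aestronglyMeasurable C
      (Eventually.of_forall fun _ => hC _)
  rw [symbolMeasure, ProbabilityMeasure.toMeasure_map,
    integral_map hsymbol.aemeasurable hφ.aestronglyMeasurable, ProbabilityMeasure.toMeasure_prod,
    integral_prod _ hint]
  refine integral_congr_ae (Eventually.of_forall fun p => ?_)
  simp [symbolMean, uniformPhase, ProbabilityTheory.cond, Real.pi_pos.le,
    intervalIntegral.integral_of_le Real.pi_pos.le]

end SymbolMeasure

section Limit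

variable {a b : ℕ → ℕ → ℝ}

theorem integral_empiricalMeasure_eigenvalues (k : ℕ) [NeZero k] (a b : ℕ → ℝ) (φ : ℝ → ℝ) :
    ∫ x, φ x ∂(empiricalMeasure (jacobiMatrix_isHermitian k a b).eigenvalues : Measure ℝ) =
      (1 / (k : ℝ)) * jacobiTrace k a b φ := by
  rw [integral_empiricalMeasure, Fintype.card_fin, jacobiTrace]

theorem tendsto_integral_of_tendsto {Ω : Type*} [TopologicalSpace Ω] [MeasurableSpace Ω]
    [OpensMeasurableSpace Ω] {μs : ℕ → ProbabilityMeasure Ω} {μ : ProbabilityMeasure Ω}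
    (h : Tendsto μs atTop (nhds μ)) {f : Ω → ℝ} (hf : Continuous f) {C : ℝ} (hC : ∀ x, |f x| ≤ C) :
    Tendsto (fun j => ∫ x, f x ∂(μs j : Measure Ω)) atTop (nhds (∫ x, f x ∂(μ : Measure Ω))) :=
  ProbabilityMeasure.tendsto_iff_forall_integral_tendsto.mp h
    (BoundedContinuousFunction.ofNormedAddCommGroup f hf C hC)

theorem tendsto_empiricalMeasure_eigenvalues
    (ha : (fun k => variationOn (a k) (Finset.range (k - 1))) =o[atTop] fun k => (k : ℝ))
    (hb : (fun k => variationOn (b k) (Finset.range (k - 1))) =o[atTop] fun k => (k : ℝ))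
    (hbtight : ∀ ε : ℝ, 0 < ε → ∃ M : ℝ, 0 < M ∧ ∀ᶠ k : ℕ in atTop,
      (((Finset.range k).filter fun j => M < |b k j|).card : ℝ) / k < ε)
    {s : ℕ → ℕ} (hs : Tendsto s atTop atTop) {μ : ProbabilityMeasure (ℝ × ℝ)}
    (hμ : Tendsto
      (fun j => empiricalMeasure fun i : Fin (s j + 1) => (a (s j + 1) i, b (s j + 1) i))
      atTop (nhds μ)) :
    Tendsto (fun j => empiricalMeasure
        (jacobiMatrix_isHermitian (s j + 1) (a (s j + 1)) (b (s j + 1))).eigenvalues)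
      atTop (nhds (symbolMeasure μ)) := by
  refine tendsto_iff_forall_lipschitz_integral_tendsto.mpr ?_
  rintro φ ⟨C, hC⟩ ⟨K, hφ⟩
  have hbound : ∀ x, |φ x| ≤ |φ 0| + C := fun x => by
    have := abs_sub_abs_le_abs_sub (φ x) (φ 0)
    linarith [hC x 0, Real.dist_eq (φ x) (φ 0)]
  have hsymbol := tendsto_integral_of_tendsto hμ (continuous_symbolMean hφ.continuous)
    (abs_symbolMean_le hbound)
  have hdiff := ((jacobiTrace_sub_sum_symbolMean_isLittleO ha hb hbtight hφ hbound).comp_tendsto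
    ((tendsto_add_atTop_nat 1).comp hs)).tendsto_div_nhds_zero
  rw [integral_symbolMeasure μ hφ.continuous hbound]
  refine (add_zero (∫ p, symbolMean φ p ∂(μ : Measure (ℝ × ℝ))) ▸ hsymbol.add hdiff).congr
    fun j => ?_
  rw [integral_empiricalMeasure, integral_empiricalMeasure_eigenvalues, Fintype.card_fin,
    Fin.sum_univ_eq_sum_range fun p => symbolMean φ (a (s j + 1) p, b (s j + 1) p)]
  simp only [Function.comp_apply]
  ring

theorem MemS'.variationOn_isLittleO (ha : MemS' a) :
    (fun k => variationOn (a k) (Finset.range (k - 1))) =o[atTop] fun k => (k : ℝ) := by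
  refine (ha.1 (1 / 2) (by norm_num)).trans_isLittleO
    (Asymptotics.isLittleO_of_tendsto (fun k hk => by norm_num [hk]) ?_)
  refine (tendsto_inv_atTop_zero.comp
    (Real.tendsto_sqrt_atTop.comp tendsto_natCast_atTop_atTop)).congr fun k => ?_
  rw [sub_half, ← Real.sqrt_eq_rpow, Real.sqrt_div_self]
  rfl

theorem exists_subsequence_trace_formula_unbounded_general (a b : ℕ → ℕ → ℝ)
    (ha : (fun k => variationOn (a k) (Finset.range (k - 1))) =o[atTop] fun k => (k : ℝ))
    (hb : (fun k => variationOn (b k) (Finset.range (k - 1))) =o[atTop] fun k => (k : ℝ))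
    (htight : ∀ ε : ℝ, 0 < ε → ∃ M : ℝ, 0 < M ∧
      ∀ᶠ k : ℕ in Filter.atTop,
        (((Finset.range k).filter fun j => M < |a k j|).card : ℝ) / k < ε ∧
        (((Finset.range k).filter fun j => M < |b k j|).card : ℝ) / k < ε) :
    ∃ g : ℕ → ℕ, StrictMono g ∧ (∀ j, 0 < g j) ∧
      ∃ μ : Measure (ℝ × ℝ), IsProbabilityMeasure μ ∧
        ∀ φ : ℝ → ℝ, Continuous φ → (∃ C : ℝ, ∀ x, |φ x| ≤ C) →
          Filter.Tendsto
            (fun j : ℕ => (1 / (g j : ℝ)) * jacobiTrace (g j) (a (g j)) (b (g j)) φ)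
            Filter.atTop
            (nhds ((1 / Real.pi) *
              ∫ p, (∫ t in (0 : ℝ)..Real.pi, φ (p.1 + 2 * p.2 * Real.cos t)) ∂μ)) := by
  obtain ⟨s, hs, μ, hμ⟩ := exists_tendsto_empiricalMeasure htight
  have hbtight : ∀ ε : ℝ, 0 < ε → ∃ M : ℝ, 0 < M ∧ ∀ᶠ k : ℕ in atTop,
      (((Finset.range k).filter fun j => M < |b k j|).card : ℝ) / k < ε := fun ε hε =>
    (htight ε hε).imp fun M hM => ⟨hM.1, hM.2.mono fun k hk => hk.2⟩
  have hspectral := tendsto_empiricalMeasure_eigenvalues ha hb hbtight hs.tendsto_atTop hμ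
  refine ⟨fun j => s j + 1, fun i j hij => Nat.succ_lt_succ (hs hij), fun j => Nat.succ_pos _,
    μ, inferInstance, fun φ hφ ⟨C, hC⟩ => ?_⟩
  have h := tendsto_integral_of_tendsto hspectral hφ hC
  simpa only [integral_empiricalMeasure_eigenvalues, integral_symbolMeasure μ hφ hC, symbolMean,
    integral_const_mul] using h

end Limit

/-- for `(a^k)ₖ, (b^k)ₖ ∈ 𝒮′` satisfying the uniform tightness condition, there
is a subsequence and a probability measure `μ` on `ℝ²` along which the trace formula holds for
every bounded continuous `φ`. -/
theorem exists_subsequence_trace_formula_unbounded (a b : ℕ → ℕ → ℝ)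
    (ha : MemS' a) (hb : MemS' b)
    (htight : ∀ ε : ℝ, 0 < ε → ∃ M : ℝ, 0 < M ∧
      ∀ᶠ k : ℕ in Filter.atTop,
        (((Finset.range k).filter fun j => M < |a k j|).card : ℝ) / k < ε ∧
        (((Finset.range k).filter fun j => M < |b k j|).card : ℝ) / k < ε) :
    ∃ g : ℕ → ℕ, StrictMono g ∧ (∀ j, 0 < g j) ∧
      ∃ μ : Measure (ℝ × ℝ), IsProbabilityMeasure μ ∧
        ∀ φ : ℝ → ℝ, Continuous φ → (∃ C : ℝ, ∀ x, |φ x| ≤ C) →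
          Filter.Tendsto
            (fun j : ℕ => (1 / (g j : ℝ)) * jacobiTrace (g j) (a (g j)) (b (g j)) φ)
            Filter.atTop
            (nhds ((1 / Real.pi) *
              ∫ p, (∫ t in (0 : ℝ)..Real.pi, φ (p.1 + 2 * p.2 * Real.cos t)) ∂μ)) := by
  exact exists_subsequence_trace_formula_unbounded_general a b ha.variationOn_isLittleO
    hb.variationOn_isLittleO htight
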